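/- arXiv:1808.04712 — 2 statements merged into one kernel-verified Lean document; each statement's English description precedes it below -/
import Mathlib

section
/- Let G be an atomic splittable polymatroid congestion game in which every cost function c_{i,e} and every derivative c'_{i,e} is L-Lipschitz, and set δ = max_{i ∈ N} d_i. Let k > 0 satisfy ρ_i(U)/k ∈ ℕ for all players i and all U ⊆ E, and d_i/k ∈ ℕ for all i. Let x = (x_i)_{i∈N} be a strategy profile of the k-integral game G_k in which x_i is a best response of player i to x_{−i}. Then for every pair of resources e, f ∈ E: if there exists α > 0 such that x_i + α(χ_f − χ_e) ∈ P_{ρ_i}(d_i), then μ_{i,f}(x) − μ_{i,e}(x) ≥ −2·k·L·(δ + 1). -/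
/-- A rank function: submodular, monotone, normalized set function. -/
def IsRank {E : Type*} [Fintype E] [DecidableEq E] (ρ : Finset E → ℝ) : Prop :=
  (∀ U V : Finset E, ρ (U ∪ V) + ρ (U ∩ V) ≤ ρ U + ρ V) ∧
  (∀ U V : Finset E, U ⊆ V → ρ U ≤ ρ V) ∧ ρ ∅ = 0

/-- Membership in the polymatroid base polytope `P_ρ(d)`. -/
def memBase {E : Type*} [Fintype E] [DecidableEq E] (ρ : Finset E → ℝ) (d : ℝ)
    (x : E → ℝ) : Prop :=
  (∀ e, 0 ≤ x e) ∧ (∀ U : Finset E, ∑ e ∈ U, x e ≤ ρ U) ∧ (∑ e, x e = d)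

/-- Membership in the `k`-integral base polytope `P^k_ρ(d)`. -/
def memKBase {E : Type*} [Fintype E] [DecidableEq E] (ρ : Finset E → ℝ) (d k : ℝ)
    (x : E → ℝ) : Prop :=
  memBase ρ d x ∧ ∀ e, ∃ q : ℕ, x e = k * q

/-!
A fractional exchange `x + α (χ_f - χ_e)` is feasible in the base polytope only if `x_e > 0` and no
constraint `U` with `f ∈ U`, `e ∉ U` is tight. When all the data are multiples of `k`, each of these
strict inequalities has slack at least `k`, so the exchange of `k` whole units is feasible as well
and the best response condition says that it does not lower the player's cost. It changes the cost
by `k (μ_f - μ_e)` up to a second order error, and the Lipschitz bounds on the costs and their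
derivatives control that error by `k² (2 L + L (x_e + x_f))`. Dividing by `k` gives the claim.
-/

open scoped NNReal

theorem add_le_of_lt_of_mem_zmultiples {G : Type*} [AddCommGroup G] [LinearOrder G]
    [IsOrderedAddMonoid G] {k a b : G} (hk : 0 < k) (ha : a ∈ AddSubgroup.zmultiples k)
    (hb : b ∈ AddSubgroup.zmultiples k) (hab : a < b) : a + k ≤ b := by
  obtain ⟨m, rfl⟩ := ha
  obtain ⟨n, rfl⟩ := hb
  have hmn : m < n := (zsmul_lt_zsmul_iff_left hk).1 hab
  calc m • k + k = (m + 1) • k := (add_one_zsmul k m).symm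
    _ ≤ n • k := zsmul_le_zsmul_left hk.le hmn

theorem exists_nat_eq_mul_iff {R : Type*} [Ring R] [LinearOrder R] [IsStrictOrderedRing R]
    {k a : R} (hk : 0 < k) :
    (∃ q : ℕ, a = k * q) ↔ 0 ≤ a ∧ a ∈ AddSubgroup.zmultiples k := by
  constructor
  · rintro ⟨q, rfl⟩
    exact ⟨by positivity, q, by simp [Nat.cast_comm]⟩
  · rintro ⟨ha, n, rfl⟩
    lift n to ℕ using (zsmul_le_zsmul_iff_left hk).1 (by simpa using ha)
    exact ⟨n, by simp [Nat.cast_comm]⟩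

section Exchange

variable {E : Type*} [DecidableEq E] {x : E → ℝ} {e f : E} {a : ℝ}

/-- The exchange `x + a (χ_f - χ_e)`, which moves `a` units from `e` to `f`. -/
def exchange (x : E → ℝ) (e f : E) (a : ℝ) : E → ℝ :=
  fun e' => x e' + a * ((if e' = f then 1 else 0) - (if e' = e then 1 else 0))

theorem exchange_apply_source (hef : e ≠ f) : exchange x e f a e = x e - a := by
  simp [exchange, hef, sub_eq_add_neg]

theorem exchange_apply_target (hef : e ≠ f) : exchange x e f a f = x f + a := by
  simp [exchange, hef.symm]

theorem exchange_apply_of_ne {e' : E} (he : e' ≠ e) (hf : e' ≠ f) :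
    exchange x e f a e' = x e' := by
  simp [exchange, he, hf]

theorem sum_exchange (U : Finset E) :
    ∑ e' ∈ U, exchange x e f a e' =
      ∑ e' ∈ U, x e' + a * ((if f ∈ U then 1 else 0) - (if e ∈ U then 1 else 0)) := by
  simp [exchange, Finset.sum_add_distrib, ← Finset.mul_sum, Finset.sum_sub_distrib]

theorem exchange_mem_zmultiples (hx : ∀ e', x e' ∈ AddSubgroup.zmultiples a) (e' : E) :
    exchange x e f a e' ∈ AddSubgroup.zmultiples a := by
  unfold exchange
  split_ifs <;> simp [hx e', add_mem, ← sub_eq_add_neg, sub_mem]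

end Exchange

section BasePolytope

variable {E : Type*} [Fintype E] [DecidableEq E] {ρ : Finset E → ℝ} {d k : ℝ} {x : E → ℝ} {e f : E}

theorem memKBase_iff_zmultiples (hk : 0 < k) :
    memKBase ρ d k x ↔ memBase ρ d x ∧ ∀ e, x e ∈ AddSubgroup.zmultiples k := by
  simp only [memKBase, exists_nat_eq_mul_iff hk]
  exact and_congr_right fun h => forall_congr' fun e => and_iff_right (h.1 e)

theorem memBase_exchange_iff (hx : memBase ρ d x) (hef : e ≠ f) {a : ℝ} (ha : 0 ≤ a) :
    memBase ρ d (exchange x e f a) ↔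
      a ≤ x e ∧ ∀ U : Finset E, f ∈ U → e ∉ U → ∑ e' ∈ U, x e' + a ≤ ρ U := by
  obtain ⟨hx0, hxρ, hxd⟩ := hx
  constructor
  · rintro ⟨h0, hρ, -⟩
    refine ⟨?_, fun U hfU heU => ?_⟩
    · simpa [exchange_apply_source hef] using h0 e
    · simpa [sum_exchange, hfU, heU] using hρ U
  · rintro ⟨hae, hU⟩
    refine ⟨fun e' => ?_, fun U => ?_, by simp [sum_exchange, hxd]⟩
    · rcases eq_or_ne e' e with rfl | he
      · simpa [exchange_apply_source hef] using hae
      rcases eq_or_ne e' f with rfl | hf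
      · simpa [exchange_apply_target hef] using add_nonneg (hx0 e') ha
      · simpa [exchange_apply_of_ne he hf] using hx0 e'
    · have hxU := hxρ U
      rw [sum_exchange]
      split_ifs with hfU heU heU
      · linarith
      · linarith [hU U hfU heU]
      all_goals linarith

theorem memKBase_exchange_of_memBase_exchange (hk : 0 < k)
    (hρ : ∀ U, ρ U ∈ AddSubgroup.zmultiples k) (hx : memKBase ρ d k x) (hef : e ≠ f) {α : ℝ}
    (hα : 0 < α) (hexch : memBase ρ d (exchange x e f α)) :
    memKBase ρ d k (exchange x e f k) := by
  rw [memKBase_iff_zmultiples hk] at hx ⊢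
  obtain ⟨hxbase, hxk⟩ := hx
  obtain ⟨hαe, hαU⟩ := (memBase_exchange_iff hxbase hef hα.le).1 hexch
  have hke : k ≤ x e := by
    simpa using add_le_of_lt_of_mem_zmultiples hk (zero_mem _) (hxk e) (hα.trans_le hαe)
  have hkU (U : Finset E) (hfU : f ∈ U) (heU : e ∉ U) : ∑ e' ∈ U, x e' + k ≤ ρ U :=
    add_le_of_lt_of_mem_zmultiples hk (sum_mem fun e' _ => hxk e') (hρ U)
      ((lt_add_of_pos_right _ hα).trans_le (hαU U hfU heU))
  exact ⟨(memBase_exchange_iff hxbase hef hk.le).2 ⟨hke, hkU⟩, exchange_mem_zmultiples hxk⟩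

theorem memBase.apply_add_apply_le (hx : memBase ρ d x) (hef : e ≠ f) : x e + x f ≤ d := by
  rw [← Finset.sum_pair hef, ← hx.2.2]
  exact Finset.sum_le_univ_sum_of_nonneg hx.1

theorem memBase.demand_nonneg (hx : memBase ρ d x) : 0 ≤ d :=
  hx.2.2 ▸ Finset.sum_nonneg fun e _ => hx.1 e

end BasePolytope

theorem norm_image_add_sub_sub_smul_deriv_le {𝕜 F : Type*} [RCLike 𝕜] [NormedAddCommGroup F]
    [NormedSpace 𝕜 F] {g : 𝕜 → F} {K : ℝ≥0} (hg : Differentiable 𝕜 g)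
    (hg' : LipschitzWith K (deriv g)) (s h : 𝕜) :
    ‖g (s + h) - g s - h • deriv g s‖ ≤ K * ‖h‖ ^ 2 := by
  have hderiv (t : 𝕜) :
      HasDerivAt (fun u => g u - (u - s) • deriv g s) (deriv g t - deriv g s) t := by
    simpa using (hg t).hasDerivAt.fun_sub (((hasDerivAt_id t).sub_const s).smul_const (deriv g s))
  have hbound : ∀ t ∈ Metric.closedBall s ‖h‖, ‖deriv g t - deriv g s‖ ≤ K * ‖h‖ := fun t ht =>
    (hg'.norm_sub_le t s).trans (by gcongr; exact mem_closedBall_iff_norm.1 ht)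
  have hmvt := (convex_closedBall s ‖h‖).norm_image_sub_le_of_norm_hasDerivWithin_le
    (fun t _ => (hderiv t).hasDerivWithinAt) hbound
    (Metric.mem_closedBall_self (norm_nonneg h)) (y := s + h) (by simp)
  calc ‖g (s + h) - g s - h • deriv g s‖ ≤ K * ‖h‖ * ‖h‖ := by
        simpa [sub_right_comm] using hmvt
    _ = K * ‖h‖ ^ 2 := by ring

section Costs

/-- The marginal cost `μ = c(s) + t c'(s)` of a player who places `t` units on a resource with cost
function `c` and total load `s`. -/
noncomputable def marginalCost (c : ℝ → ℝ) (s t : ℝ) : ℝ :=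
  c s + t * deriv c s

theorem abs_cost_add_sub_cost_sub_mul_marginalCost_le {c : ℝ → ℝ} {K K' : ℝ≥0}
    (hc : Differentiable ℝ c) (hlip : LipschitzWith K c) (hlip' : LipschitzWith K' (deriv c))
    (s t h : ℝ) :
    |c (s + h) * (t + h) - c s * t - h * marginalCost c s t| ≤ (K + K' * |t|) * h ^ 2 := by
  have hfirst : |c (s + h) - c s| ≤ K * |h| := by
    simpa using hlip.norm_sub_le (s + h) s
  have hsecond : |c (s + h) - c s - h * deriv c s| ≤ K' * |h| ^ 2 :=
    norm_image_add_sub_sub_smul_deriv_le hc hlip' s h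
  calc |c (s + h) * (t + h) - c s * t - h * marginalCost c s t|
      = |h * (c (s + h) - c s) + t * (c (s + h) - c s - h * deriv c s)| := by
        congr 1; unfold marginalCost; ring
    _ ≤ |h| * |c (s + h) - c s| + |t| * |c (s + h) - c s - h * deriv c s| := by
        rw [← abs_mul, ← abs_mul]; exact abs_add_le _ _
    _ ≤ |h| * (K * |h|) + |t| * (K' * |h| ^ 2) := by gcongr
    _ = (K + K' * |t|) * |h| ^ 2 := by ring
    _ = (K + K' * |t|) * h ^ 2 := by rw [sq_abs]

variable {E : Type*} [Fintype E]

/-- The cost `π = ∑ e, c_e(s_e) t_e` of a player with strategy `t` under total loads `s`. -/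
def playerCost (c : E → ℝ → ℝ) (s t : E → ℝ) : ℝ :=
  ∑ e, c e (s e) * t e

theorem abs_playerCost_exchange_sub_le [DecidableEq E] {c : E → ℝ → ℝ} {K K' : ℝ≥0}
    (hc : ∀ e, Differentiable ℝ (c e)) (hlip : ∀ e, LipschitzWith K (c e))
    (hlip' : ∀ e, LipschitzWith K' (deriv (c e))) (s t : E → ℝ) {e f : E} (hef : e ≠ f) (a : ℝ) :
    |playerCost c (s + (exchange t e f a - t)) (exchange t e f a) - playerCost c s t -
        a * (marginalCost (c f) (s f) (t f) - marginalCost (c e) (s e) (t e))| ≤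
      (2 * K + K' * (|t e| + |t f|)) * a ^ 2 := by
  have hdiff : playerCost c (s + (exchange t e f a - t)) (exchange t e f a) - playerCost c s t =
      (c e (s e + -a) * (t e + -a) - c e (s e) * t e) +
        (c f (s f + a) * (t f + a) - c f (s f) * t f) := by
    unfold playerCost
    rw [← Finset.sum_sub_distrib, Fintype.sum_eq_add e f hef]
    · simp [exchange_apply_source hef, exchange_apply_target hef, sub_eq_add_neg]
    · rintro e' ⟨he, hf⟩
      simp [exchange_apply_of_ne he hf]
  have hsource := abs_cost_add_sub_cost_sub_mul_marginalCost_le (hc e) (hlip e) (hlip' e)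
    (s e) (t e) (-a)
  have htarget := abs_cost_add_sub_cost_sub_mul_marginalCost_le (hc f) (hlip f) (hlip' f)
    (s f) (t f) a
  rw [abs_le] at hsource htarget ⊢
  constructor <;> linarith

end Costs

section Game

variable {N E : Type*} [Fintype N]

/-- The total loads `x_e = ∑ i, x_{i,e}` of a strategy profile. -/
def totalLoad (x : N → E → ℝ) : E → ℝ :=
  fun e => ∑ j, x j e

theorem totalLoad_update [DecidableEq N] (x : N → E → ℝ) (i : N) (y : E → ℝ) :
    totalLoad (Function.update x i y) = totalLoad x + (y - x i) := by
  have hsum : ∑ j, (Function.update x i y j - x j) = y - x i := by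
    rw [Fintype.sum_eq_single i fun j hj => by simp [hj], Function.update_self]
  ext e
  simpa [totalLoad, sub_eq_iff_eq_add'] using congrFun hsum e

theorem stmt_3_general [DecidableEq N] [Fintype E] [DecidableEq E] {ρ : Finset E → ℝ} {d k : ℝ}
    {c : E → ℝ → ℝ} {K K' : ℝ≥0} (hc : ∀ e, Differentiable ℝ (c e))
    (hlip : ∀ e, LipschitzWith K (c e)) (hlip' : ∀ e, LipschitzWith K' (deriv (c e)))
    (hk : 0 < k) (hρ : ∀ U, ∃ q : ℕ, ρ U = k * q) {x : N → E → ℝ} {i : N}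
    (hx : memKBase ρ d k (x i))
    (hbr : ∀ y, memKBase ρ d k y →
      playerCost c (totalLoad x) (x i) ≤ playerCost c (totalLoad (Function.update x i y)) y)
    {e f : E} (hexch : ∃ α > 0, memBase ρ d (exchange (x i) e f α)) :
    -(k * (2 * K + K' * d)) ≤
      marginalCost (c f) (totalLoad x f) (x i f) - marginalCost (c e) (totalLoad x e) (x i e) := by
  have hd : 0 ≤ d := hx.1.demand_nonneg
  rcases eq_or_ne e f with rfl | hef
  · rw [sub_self]
    exact neg_nonpos.2 (by positivity)
  obtain ⟨α, hα, hα_mem⟩ := hexch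
  have hρ_mem (U : Finset E) : ρ U ∈ AddSubgroup.zmultiples k :=
    ((exists_nat_eq_mul_iff hk).1 (hρ U)).2
  have hcost := hbr _ (memKBase_exchange_of_memBase_exchange hk hρ_mem hx hef hα hα_mem)
  rw [totalLoad_update] at hcost
  have herror := (abs_le.1
    (abs_playerCost_exchange_sub_le hc hlip hlip' (totalLoad x) (x i) hef k)).2
  have hsum : |x i e| + |x i f| ≤ d := by
    simpa only [abs_of_nonneg (hx.1.1 _)] using hx.1.apply_add_apply_le hef
  have herror_le : (2 * K + K' * (|x i e| + |x i f|)) * k ^ 2 ≤ (2 * K + K' * d) * k ^ 2 := by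
    gcongr
  refine le_of_mul_le_mul_left ?_ hk
  linarith

end Game

/-- Lemma 3 of the paper in game form: in an atomic splittable polymatroid
congestion game with `L`-Lipschitz costs and derivatives, if each `x i` is a
best response in the `k`-integral game and a fractional exchange from `e` to
`f` is feasible for player `i`, then the continuous marginal costs satisfy
`μ_{i,f}(x) − μ_{i,e}(x) ≥ −2kL(δ+1)` where `δ = max_i d_i`. -/
theorem stmt_3 {N E : Type*} [Fintype N] [Nonempty N] [DecidableEq N]
    [Fintype E] [DecidableEq E]
    (ρ : N → Finset E → ℝ) (hρ : ∀ i, IsRank (ρ i))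
    (d : N → ℝ) (hd : ∀ i, 0 < d i) (hdρ : ∀ i, d i ≤ ρ i Finset.univ)
    (c : N → E → ℝ → ℝ)
    (hcnonneg : ∀ i e t, 0 ≤ c i e t)
    (hcmono : ∀ i e, Monotone (c i e))
    (hcdiff : ∀ i e, Differentiable ℝ (c i e))
    (hcconv : ∀ i e, ConvexOn ℝ Set.univ (c i e))
    (L : ℝ) (hL : 0 < L)
    (hlip : ∀ i e x y, |c i e y - c i e x| ≤ L * |y - x|)
    (hlip' : ∀ i e x y, |deriv (c i e) y - deriv (c i e) x| ≤ L * |y - x|)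
    (δ : ℝ) (hδ : IsGreatest (Set.range d) δ)
    (k : ℝ) (hk : 0 < k)
    (hρk : ∀ i U, ∃ q : ℕ, ρ i U = k * q)
    (hdk : ∀ i, ∃ q : ℕ, d i = k * q)
    (x : N → E → ℝ) (hx : ∀ i, memKBase (ρ i) (d i) k (x i))
    (hbr : ∀ i yi, memKBase (ρ i) (d i) k yi →
      ∑ e, c i e (∑ j, x j e) * x i e ≤
        ∑ e, c i e (∑ j, Function.update x i yi j e) * yi e)
    (i : N) (e f : E)
    (hexch : ∃ α > 0, memBase (ρ i) (d i)
      (fun e' => x i e' + α * ((if e' = f then 1 else 0) - (if e' = e then 1 else 0)))) :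
    (c i f (∑ j, x j f) + x i f * deriv (c i f) (∑ j, x j f)) -
      (c i e (∑ j, x j e) + x i e * deriv (c i e) (∑ j, x j e)) ≥
      -(2 * k * L * (δ + 1)) := by
  lift L to ℝ≥0 using hL.le
  have hbound := stmt_3_general (hcdiff i) (fun e => .of_dist_le_mul fun y x => hlip i e x y)
    (fun e => .of_dist_le_mul fun y x => hlip' i e x y) hk (hρk i) (hx i) (hbr i) hexch
  refine (neg_le_neg ?_).trans hbound
  nlinarith [mul_pos hk hL, hd i, hδ.2 (Set.mem_range_self i)]
end

section
/- Let M be a multimarket oligopoly with price functions p_{i,e} and quadratic production costs C_i(t) = c_i·t², c_i ≥ 0, and let d_i > 0 be such that the strategy set of firm i is restricted to X_i = {x_i ∈ ℝ^{E_i}_{≥0} : Σ_{e∈E_i} x_{i,e} ≤ d_i}. Construct the game G as follows: introduce pairwise distinct new resources e_1,…,e_n, set Ẽ_i = E_i ∪ {e_i}, costs c_{i,e}(t) = −p_{i,e}(t) for e ∈ E_i and c_{i,e_i}(t) = c_i·(t − 2d_i), strategy sets Y_i = {y_i ∈ ℝ^{Ẽ_i}_{≥0} : Σ_{e∈Ẽ_i}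 y_{i,e} = d_i}, player costs π_i(y) = Σ_{e∈Ẽ_i} c_{i,e}(y_e)·y_{i,e} where y_e is the total load on resource e, and φ_i(x_i) = (x_i, d_i − Σ_{e∈E_i} x_{i,e}). Then for every ε ≥ 0 and every profile x ∈ Π_i X_i: x is an ε-approximate Cournot equilibrium of M — meaning u_i(x'_i, x_{−i}) ≤ u_i(x) + ε for every firm i and every x'_i ∈ X_i — if and only if (φ_1(x_1),…,φ_n(x_n)) is an ε-approximate equilibrium of G — meaning π_i(y'_i, φ(x)_{−i}) ≥ π_i(φ(x)) − ε for every i and every y'_i ∈ Y_i. -/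
open Finset

/-- Total quantity offered on market `e`: the sum of the productions of all
firms having access to `e`. -/
noncomputable def marketLoad {N E : Type*} [Fintype N] [DecidableEq E]
    (Emkt : N → Finset E) (x : N → E → ℝ) (e : E) : ℝ :=
  ∑ i ∈ Finset.univ.filter (fun i => e ∈ Emkt i), x i e

/-- Utility of firm `i` in the multimarket oligopoly with quadratic production
costs `C_i(t) = c_i t²`. -/
noncomputable def cournotUtil {N E : Type*} [Fintype N] [DecidableEq E]
    (Emkt : N → Finset E) (p : N → E → ℝ → ℝ) (cc : N → ℝ)
    (x : N → E → ℝ) (i : N) : ℝ :=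
  ∑ e ∈ Emkt i, p i e (marketLoad Emkt x e) * x i e -
    cc i * (∑ e ∈ Emkt i, x i e) ^ 2

/-- The transformation `φ_i(x_i) = (x_i, d_i − Σ_{e∈E_i} x_{i,e})` of a Cournot
strategy into a strategy on the extended resource set `E ⊕ N`, where `Sum.inr i`
is the firm-specific extra resource `e_i`. -/
noncomputable def cournotPhi {N E : Type*} [Fintype E] [DecidableEq E] [DecidableEq N]
    (Emkt : N → Finset E) (d : N → ℝ) (x : N → E → ℝ) :
    N → (E ⊕ N) → ℝ :=
  fun i r =>
    match r with
    | Sum.inl e => x i e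
    | Sum.inr j => if j = i then d i - ∑ e ∈ Emkt i, x i e else 0

/-- Player-specific cost functions of the constructed atomic splittable game:
`c_{i,e}(t) = −p_{i,e}(t)` on the markets and `c_{i,e_i}(t) = c_i (t − 2 d_i)`
on the extra resource of firm `i`. -/
def cournotCost {N E : Type*} (p : N → E → ℝ → ℝ) (cc : N → ℝ) (d : N → ℝ) :
    N → (E ⊕ N) → ℝ → ℝ :=
  fun i r t =>
    match r with
    | Sum.inl e => -(p i e t)
    | Sum.inr _ => cc i * (t - 2 * d i)

/-- The allowable resource set `Ẽ_i = E_i ∪ {e_i}` of player `i`. -/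
def cournotResources {N E : Type*} [DecidableEq E] [DecidableEq N]
    (Emkt : N → Finset E) (i : N) : Finset (E ⊕ N) :=
  (Emkt i).image Sum.inl ∪ {Sum.inr i}

/-- Cost `π_i` of player `i` in the constructed atomic splittable game. -/
noncomputable def cournotPi {N E : Type*} [Fintype N] [Fintype E]
    [DecidableEq E] [DecidableEq N]
    (Emkt : N → Finset E) (p : N → E → ℝ → ℝ) (cc : N → ℝ) (d : N → ℝ)
    (y : N → (E ⊕ N) → ℝ) (i : N) : ℝ :=
  ∑ r ∈ cournotResources Emkt i, cournotCost p cc d i r (∑ j, y j r) * y i r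

/-!
The map `φ_i` appends to a production vector the capacity it leaves unused, so it maps the capped
simplex `X_i` onto the simplex `Y_i`. With `s` the total production of
firm `i`, the extra resource costs `c_i ((d_i - s) - 2 d_i) (d_i - s) = c_i s² - c_i d_i²`, which is
the production cost up to a constant. So `φ` carries the oligopoly onto the congestion game and
changes all payoffs of a firm by the same constant, which cancels in every comparison between a
profile and a unilateral deviation.
-/

section ApproxNash

variable {N R : Type*} [DecidableEq N] [AddCommGroup R] [PartialOrder R] {A B : N → Type*}

/-- The profile `x` is an `ε`-approximate Nash equilibrium of the game in which player `i` chooses a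
strategy in `S i` and receives the payoff `u x i`: no unilateral deviation gains more than `ε`.
Membership of `x` itself in the strategy sets is not part of the definition; games with costs are
covered by taking negative costs as payoffs. -/
def IsApproxNash (S : ∀ i, Set (A i)) (u : (∀ i, A i) → N → R) (ε : R) (x : ∀ i, A i) : Prop :=
  ∀ i, ∀ z ∈ S i, u (Function.update x i z) i ≤ u x i + ε

theorem isApproxNash_iff_of_image_eq [IsOrderedAddMonoid R]
    {S W : ∀ i, Set (A i)} {T : ∀ i, Set (B i)}
    {u : (∀ i, A i) → N → R} {v : (∀ i, B i) → N → R} {φ : ∀ i, A i → B i} {K : N → R}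
    (hST : ∀ i, φ i '' S i = T i) (hSW : ∀ i, S i ⊆ W i)
    (huv : ∀ w ∈ Set.univ.pi W, ∀ i, v (fun j => φ j (w j)) i = u w i + K i)
    {x : ∀ i, A i} (hx : x ∈ Set.univ.pi W) {ε : R} :
    IsApproxNash S u ε x ↔ IsApproxNash T v ε (fun j => φ j (x j)) := by
  refine forall_congr' fun i => ?_
  rw [← hST, Set.forall_mem_image]
  refine forall₂_congr fun z hz => ?_
  have hz' : Function.update x i z ∈ Set.univ.pi W :=
    (Set.update_mem_pi_iff_of_mem hx).2 fun _ => hSW i hz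
  have hφ : Function.update (fun j => φ j (x j)) i (φ i z) =
      fun j => φ j (Function.update x i z j) :=
    funext fun j => (Function.apply_update φ x i z j).symm
  rw [hφ, huv _ hz', huv _ hx, add_right_comm, add_le_add_iff_right]

end ApproxNash

section Slack

variable {α E N R : Type*} [AddCommGroup R] [PartialOrder R]

/-- The simplex of non-negative functions that vanish off `s` and have total `t`: the strategy set
of a player of an atomic splittable game who distributes the demand `t` over the resources `s`. -/
def scaledSimplex (s : Finset α) (t : R) : Set (α → R) :=
  {y | (∀ a, 0 ≤ y a) ∧ (∀ a, a ∉ s → y a = 0) ∧ ∑ a ∈ s, y a = t}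

/-- The non-negative functions that vanish off `s` and have total at most `t`: the strategy set of
a firm with access to the markets `s` and production capacity `t`. -/
def cappedSimplex (s : Finset α) (t : R) : Set (α → R) :=
  {z | (∀ a, 0 ≤ z a) ∧ (∀ a, a ∉ s → z a = 0) ∧ ∑ a ∈ s, z a ≤ t}

/-- The map `φ_i` of a single firm: the extension of `z` that puts on the resource `Sum.inr k` the
part of the capacity `t` which `z` leaves unused on `s`. -/
def withSlack [DecidableEq N] (s : Finset E) (t : R) (k : N) (z : E → R) : E ⊕ N → R :=
  Sum.elim z (Pi.single k (t - ∑ e ∈ s, z e))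

variable {s : Finset E} {t : R} {k : N}

theorem comp_inl_mem_cappedSimplex [IsOrderedAddMonoid R] {y : E ⊕ N → R}
    (hy : y ∈ scaledSimplex (s.disjSum {k}) t) : y ∘ Sum.inl ∈ cappedSimplex s t := by
  obtain ⟨hy_nonneg, hy_supp, hy_sum⟩ := hy
  refine ⟨fun e => hy_nonneg _, fun e he => hy_supp _ (by simpa using he), ?_⟩
  rw [← hy_sum, sum_disjSum, sum_singleton]
  exact le_add_of_nonneg_right (hy_nonneg _)

variable [DecidableEq N]

theorem withSlack_mem_scaledSimplex [IsOrderedAddMonoid R] {z : E → R}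
    (hz : z ∈ cappedSimplex s t) : withSlack s t k z ∈ scaledSimplex (s.disjSum {k}) t := by
  obtain ⟨hz_nonneg, hz_supp, hz_sum⟩ := hz
  refine ⟨?_, ?_, by simp [withSlack]⟩
  · rintro (e | j)
    · exact hz_nonneg e
    · have hslack : 0 ≤ (Pi.single k (t - ∑ e ∈ s, z e) : N → R) :=
        Pi.single_nonneg.2 (sub_nonneg.2 hz_sum)
      exact hslack j
  · rintro (e | j) hr
    · exact hz_supp e (by simpa using hr)
    · exact Pi.single_eq_of_ne (by simpa using hr) _

theorem withSlack_comp_inl {y : E ⊕ N → R} (hy : y ∈ scaledSimplex (s.disjSum {k}) t) :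
    withSlack s t k (y ∘ Sum.inl) = y := by
  obtain ⟨-, hy_supp, hy_sum⟩ := hy
  rw [sum_disjSum, sum_singleton] at hy_sum
  ext (e | j)
  · rfl
  · obtain rfl | hj := eq_or_ne j k
    · simp [withSlack, ← hy_sum]
    · simp [withSlack, hj, hy_supp (Sum.inr j) (by simpa using hj)]

theorem image_withSlack_cappedSimplex [IsOrderedAddMonoid R] :
    withSlack s t k '' cappedSimplex s t = scaledSimplex (s.disjSum {k}) t :=
  (Set.mapsTo_iff_image_subset.1 fun _ => withSlack_mem_scaledSimplex).antisymm
    fun y hy => ⟨y ∘ Sum.inl, comp_inl_mem_cappedSimplex hy, withSlack_comp_inl hy⟩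

end Slack

section Cournot

variable {N E : Type*} [DecidableEq E] (Emkt : N → Finset E)

theorem cournotResources_eq_disjSum [DecidableEq N] (i : N) :
    cournotResources Emkt i = (Emkt i).disjSum {i} := by
  ext (e | j) <;> simp [cournotResources]

theorem cournotPhi_eq_withSlack [Fintype E] [DecidableEq N] (d : N → ℝ) (x : N → E → ℝ) :
    cournotPhi Emkt d x = fun i => withSlack (Emkt i) (d i) i (x i) := by
  ext i (e | j)
  · rfl
  · simp [cournotPhi, withSlack, Pi.single_apply]

variable [Fintype N] {Emkt} {x : N → E → ℝ}

theorem marketLoad_eq_sum (hx : ∀ i e, e ∉ Emkt i → x i e = 0) (e : E) :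
    marketLoad Emkt x e = ∑ j, x j e :=
  sum_filter_of_ne fun j _ => Not.imp_symm (hx j e)

variable [Fintype E] [DecidableEq N] (p : N → E → ℝ → ℝ) (c d : N → ℝ)

theorem neg_cournotPi_cournotPhi (hx : ∀ i e, e ∉ Emkt i → x i e = 0) (i : N) :
    -cournotPi Emkt p c d (cournotPhi Emkt d x) i =
      cournotUtil Emkt p c x i + c i * d i ^ 2 := by
  have hslack : ∑ j, cournotPhi Emkt d x j (Sum.inr i) = d i - ∑ e ∈ Emkt i, x i e := by
    simp [cournotPhi]
  simp only [cournotPi, cournotResources_eq_disjSum, sum_disjSum, sum_singleton, cournotCost,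
    hslack]
  simp only [cournotPhi, cournotUtil, marketLoad_eq_sum hx, if_true, neg_mul, sum_neg_distrib]
  ring

theorem stmt_14_general (ε : ℝ) (hx : ∀ i e, e ∉ Emkt i → x i e = 0) :
    IsApproxNash (fun i => cappedSimplex (Emkt i) (d i)) (cournotUtil Emkt p c) ε x ↔
      IsApproxNash (fun i => scaledSimplex (cournotResources Emkt i) (d i))
        (fun y i => -cournotPi Emkt p c d y i) ε (cournotPhi Emkt d x) := by
  simp only [cournotResources_eq_disjSum, cournotPhi_eq_withSlack]
  refine isApproxNash_iff_of_image_eq (W := fun i => {z : E → ℝ | ∀ e, e ∉ Emkt i → z e = 0})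
    (K := fun i => c i * d i ^ 2) (fun i => image_withSlack_cappedSimplex)
    (fun i z hz => hz.2.1) (fun w hw i => ?_) fun i _ => hx i
  rw [← cournotPhi_eq_withSlack]
  exact neg_cournotPi_cournotPhi p c d (fun j => hw j trivial) i

end Cournot

/-- ε-approximate equilibrium correspondence of Theorem 2 of the paper:
a profile `x` (with non-negative productions supported on `E_i` and total
production at most `d_i`) is an ε-approximate Cournot equilibrium of the
multimarket oligopoly iff its image `(φ_i(x_i))_i` is an ε-approximate
equilibrium of the constructed atomic splittable singleton congestion game. -/
theorem stmt_14 {N E : Type*} [Fintype N] [Fintype E] [DecidableEq E] [DecidableEq N]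
    (Emkt : N → Finset E)
    (p : N → E → ℝ → ℝ)
    (cc : N → ℝ) (hcc : ∀ i, 0 ≤ cc i)
    (d : N → ℝ) (hd : ∀ i, 0 < d i)
    (ε : ℝ) (hε : 0 ≤ ε)
    (x : N → E → ℝ)
    (hx0 : ∀ i e, 0 ≤ x i e)
    (hxs : ∀ i e, e ∉ Emkt i → x i e = 0)
    (hxd : ∀ i, ∑ e ∈ Emkt i, x i e ≤ d i) :
    (∀ i (xi' : E → ℝ), (∀ e, 0 ≤ xi' e) → (∀ e, e ∉ Emkt i → xi' e = 0) →
        (∑ e ∈ Emkt i, xi' e ≤ d i) →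
        cournotUtil Emkt p cc (Function.update x i xi') i ≤
          cournotUtil Emkt p cc x i + ε) ↔
      (∀ i (yi' : (E ⊕ N) → ℝ), (∀ r, 0 ≤ yi' r) →
        (∀ r, r ∉ cournotResources Emkt i → yi' r = 0) →
        (∑ r ∈ cournotResources Emkt i, yi' r = d i) →
        cournotPi Emkt p cc d (Function.update (cournotPhi Emkt d x) i yi') i ≥
          cournotPi Emkt p cc d (cournotPhi Emkt d x) i - ε) := by
  simpa [IsApproxNash, cappedSimplex, scaledSimplex, add_comm] using
    stmt_14_general p cc d ε hxs
end
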